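/- Let Y be a topological space, b ∈ Y, ℓ ≥ 1, and 0 < ρ ≤ 1. Let Φ : ℝ^ℓ → S^ℓ ⊆ ℝ^{ℓ+1} be the inverse stereographic map Φ(x) = ( 2x/(1+|x|²), (1−|x|²)/(1+|x|²) ), which sends the closed unit ball B̄^ℓ onto the closed upper hemisphere and fixes S^{ℓ−1} × {0}. Let U : { x ∈ ℝ^{ℓ+1} : |x| ≤ 1, x_{ℓ+1} ≥ 0 } → Y be continuous, set u(x) = U(x, 0) for x ∈ B̄^ℓ, and assume u(x) = b whenever ρ ≤ |x| ≤ 1. Then for every r ∈ [ρ, 1], the map B̄^ℓ ∋ x ↦ U(r · Φ(x)) is homotopic to u relative to S^{ℓ−1}, i.e., there is a continuous H : B̄^ℓ × [0,1] → Y with H(·,0) = u, H(·,1) = (x ↦ U(r·Φ(x))), and H(x, t) = b for every x ∈ S^{ℓ−1} and t ∈ [0,1]. -/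

import Mathlib

open Metric Set

noncomputable section

/-- rescaled restrictions of a continuous map `U` on the closed upper half-ball to
upper half-spheres of radii `r ∈ [ρ, 1]`, transported to `B̄^ℓ` by the inverse stereographic
map `Φ(x) = (2x/(1+|x|²), (1-|x|²)/(1+|x|²))`, are all homotopic to `u = U(·,0)` relative to
`S^{ℓ-1}`, provided `u = b` on `{ρ ≤ |x| ≤ 1}`. -/
theorem statement6.{u_1} (Y : Type u_1) [TopologicalSpace Y] (b : Y)
    (l : ℕ) (hl : 1 ≤ l) (ρ : ℝ) (hρ0 : 0 < ρ) (hρ1 : ρ ≤ 1)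
    (U : EuclideanSpace ℝ (Fin l) × ℝ → Y)
    (hU : ContinuousOn U {z : EuclideanSpace ℝ (Fin l) × ℝ | ‖z.1‖ ^ 2 + z.2 ^ 2 ≤ 1 ∧ 0 ≤ z.2})
    (u : EuclideanSpace ℝ (Fin l) → Y)
    (hu : ∀ x : EuclideanSpace ℝ (Fin l), u x = U (x, 0))
    (hub : ∀ x : EuclideanSpace ℝ (Fin l), ρ ≤ ‖x‖ → ‖x‖ ≤ 1 → u x = b) :
    ∀ r ∈ Icc ρ 1, ∃ H : EuclideanSpace ℝ (Fin l) × ℝ → Y,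
      ContinuousOn H (closedBall 0 1 ×ˢ Icc (0 : ℝ) 1) ∧
      (∀ x ∈ closedBall (0 : EuclideanSpace ℝ (Fin l)) 1,
        H (x, 0) = u x ∧
        H (x, 1) = U (r • (((2 / (1 + ‖x‖ ^ 2)) • x : EuclideanSpace ℝ (Fin l)),
          (1 - ‖x‖ ^ 2) / (1 + ‖x‖ ^ 2)))) ∧
      (∀ x ∈ sphere (0 : EuclideanSpace ℝ (Fin l)) 1, ∀ t ∈ Icc (0 : ℝ) 1, H (x, t) = b) := by
  intro r hr
  obtain ⟨hr1, hr2⟩ := hr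
  have hr0 : 0 < r := lt_of_lt_of_le hρ0 hr1
  refine ⟨fun p => U (((1 - p.2) + p.2 * (r * (2 / (1 + ‖p.1‖ ^ 2)))) • p.1,
    p.2 * (r * ((1 - ‖p.1‖ ^ 2) / (1 + ‖p.1‖ ^ 2)))), ?_, ?_, ?_⟩
  · have hpos : ∀ p : EuclideanSpace ℝ (Fin l) × ℝ, 1 + ‖p.1‖ ^ 2 ≠ 0 := fun p => by positivity
    refine hU.comp (Continuous.continuousOn ?_) ?_
    · fun_prop (disch := exact hpos _)
    · rintro ⟨x, t⟩ ⟨hx, ht0, ht1⟩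
      simp only [mem_closedBall, dist_zero_right] at hx ht0 ht1
      have hn := norm_nonneg x
      have hA : 0 ≤ 2 / (1 + ‖x‖ ^ 2) := by positivity
      have hB : 0 ≤ (1 - ‖x‖ ^ 2) / (1 + ‖x‖ ^ 2) :=
        div_nonneg (by nlinarith) (by positivity)
      have hAB : (2 / (1 + ‖x‖ ^ 2) * ‖x‖) ^ 2 + ((1 - ‖x‖ ^ 2) / (1 + ‖x‖ ^ 2)) ^ 2 = 1 := by
        have := hpos (x, t)
        field_simp
        ring
      refine ⟨?_, by dsimp only; positivity⟩
      dsimp only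
      generalize 2 / (1 + ‖x‖ ^ 2) = A at *
      generalize (1 - ‖x‖ ^ 2) / (1 + ‖x‖ ^ 2) = B at *
      rw [norm_smul, Real.norm_eq_abs, mul_pow, sq_abs, ← mul_pow]
      have hcx : ∀ p q : ℝ, ((1 - t) * p + t * q) ^ 2 ≤ (1 - t) * p ^ 2 + t * q ^ 2 := by
        intro p q
        nlinarith [mul_nonneg (mul_nonneg ht0 (sub_nonneg.2 ht1)) (sq_nonneg (p - q))]
      have h1 := hcx ‖x‖ (r * (A * ‖x‖))
      have h2 := hcx 0 (r * B)
      have h3 : (r * (A * ‖x‖)) ^ 2 + (r * B) ^ 2 ≤ 1 := by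
        have : (r * (A * ‖x‖)) ^ 2 + (r * B) ^ 2 = r ^ 2 := by linear_combination r ^ 2 * hAB
        rw [this]; nlinarith
      have h4 : ‖x‖ ^ 2 ≤ 1 := by nlinarith
      have e1 : ((1 - t + t * (r * A)) * ‖x‖) = (1 - t) * ‖x‖ + t * (r * (A * ‖x‖)) := by ring
      rw [e1]
      have h5 := mul_le_mul_of_nonneg_left h3 ht0
      have h6 := mul_le_mul_of_nonneg_left h4 (sub_nonneg.2 ht1)
      simp only [mul_zero, zero_add] at h2
      nlinarith
  · intro x _
    refine ⟨by simp [hu], ?_⟩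
    simp [smul_smul]
  · rintro x hx t ⟨ht0, ht1⟩
    have hx : ‖x‖ = 1 := by simpa using hx
    have e : (1 - t) + t * (r * (2 / (1 + ‖x‖ ^ 2))) = 1 - t + t * r := by
      rw [hx]; norm_num
    have hc : r ≤ 1 - t + t * r := by nlinarith
    have hc1 : 1 - t + t * r ≤ 1 := by nlinarith
    have hnorm : ‖(1 - t + t * r) • x‖ = 1 - t + t * r := by
      rw [norm_smul, hx, mul_one, Real.norm_of_nonneg (by linarith)]
    dsimp only
    rw [e, ← hub ((1 - t + t * r) • x) (by linarith) (by linarith), hu]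
    simp [hx]

end
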